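/- arXiv:1412.1896 — 4 statements merged into one kernel-verified Lean document; each statement's English description precedes it below -/
import Mathlib

section
/- Lemma 3.6: let a* := sup_{x∈ℝ} j(x) ∈ (0, ∞] be the right endpoint of the interval ℝ_j := j(ℝ). Then a* is attained by j (i.e. there exists x with j(x) = a*, equivalently G has a component of the form (a₊, ∞)) if and only if there exists c < a* with m({x ∈ ℝ : c < j(x) < a*}) < ∞. Symmetrically, the left endpoint b* := inf_{x∈ℝ} j(x) is attained (equivalently G has a component (−∞, b₋)) if and only if there exists c > b* with m({x ∈ ℝ : b* < j(x) < c}) < ∞. -/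
open MeasureTheory Set Filter

/-- The darning map `j(x) = ∫_z^x 1_F(t) dt`, `F = Gᶜ`. -/
noncomputable def jmap (G : Set ℝ) (z : ℝ) : ℝ → ℝ :=
  fun x => ∫ t in z..x, Gᶜ.indicator (fun _ => (1:ℝ)) t

/-!
Two values `j x ≤ j y` differ by the measure of `F = Gᶜ` in `(x, y)`, and `F` charges every
neighbourhood of each of its points, so `j x = j y` exactly when `(x, y) ⊆ G`. Hence `j` attains its
supremum at `x` exactly when `(x, ∞) ⊆ G`, and the half-line extends leftwards to the maximum
of `F`. For the measure criterion it is enough that `j` is monotone and not constant: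
`{j w < j < j x}` lies in `(w, x)`, whereas if the supremum is not attained, `{c < j < sup j}`
contains a whole half-line. The claims about the infimum are the same claims for the reversed
orders.
-/

section MonotoneFunctions

variable {α β : Type*} {f : α → β}

theorem eq_iSup_iff_of_monotone [SemilatticeSup α] [CompleteLattice β] (hf : Monotone f) {x : α} :
    (f x = ⨆ y, f y) ↔ ∀ y, x ≤ y → f x = f y := by
  refine ⟨fun h y hxy => (hf hxy).antisymm (h ▸ le_iSup f y), fun h => ?_⟩
  refine (le_iSup f x).antisymm (iSup_le fun y => ?_)
  exact (hf le_sup_right).trans (h (x ⊔ y) le_sup_left).ge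

theorem eq_iInf_iff_of_monotone [SemilatticeInf α] [CompleteLattice β] (hf : Monotone f) {x : α} :
    (f x = ⨅ y, f y) ↔ ∀ y, y ≤ x → f x = f y :=
  eq_iSup_iff_of_monotone (α := αᵒᵈ) (β := βᵒᵈ) hf.dual

variable [LinearOrder α] [CompleteLinearOrder β] [MeasurableSpace α] {μ : Measure α}

theorem exists_eq_iSup_iff_exists_measure_lt_top (hf : Monotone f)
    (hIoo : ∀ a b, μ (Ioo a b) < ⊤) (hIci : ∀ a, μ (Ici a) = ⊤) (hlt : ∃ x, f x < ⨆ y, f y) :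
    (∃ x, f x = ⨆ y, f y) ↔ ∃ c < ⨆ y, f y, μ {x | c < f x ∧ f x < ⨆ y, f y} < ⊤ := by
  constructor
  · rintro ⟨x, hx⟩
    obtain ⟨w, hw⟩ := hlt
    have hsub : {t | f w < f t ∧ f t < f x} ⊆ Ioo w x :=
      fun t ht => ⟨hf.reflect_lt ht.1, hf.reflect_lt ht.2⟩
    exact ⟨f w, hw, hx ▸ (measure_mono hsub).trans_lt (hIoo w x)⟩
  · rintro ⟨c, hc, hfin⟩
    by_contra! hne
    obtain ⟨w, hw⟩ := lt_iSup_iff.1 hc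
    have hsub : Ici w ⊆ {t | c < f t ∧ f t < ⨆ y, f y} :=
      fun t ht => ⟨hw.trans_le (hf ht), (le_iSup f t).lt_of_ne (hne t)⟩
    exact hfin.ne (measure_mono_top hsub (hIci w))

theorem exists_eq_iInf_iff_exists_measure_lt_top (hf : Monotone f)
    (hIoo : ∀ a b, μ (Ioo a b) < ⊤) (hIic : ∀ a, μ (Iic a) = ⊤) (hlt : ∃ x, (⨅ y, f y) < f x) :
    (∃ x, f x = ⨅ y, f y) ↔ ∃ c > ⨅ y, f y, μ {x | (⨅ y, f y) < f x ∧ f x < c} < ⊤ := by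
  simp only [and_comm (a := (⨅ y, f y) < f _)]
  exact exists_eq_iSup_iff_exists_measure_lt_top (α := αᵒᵈ) (β := βᵒᵈ) hf.dual
    (fun a b => (congrArg μ Ioo_toDual).trans_lt (hIoo b a)) hIic hlt

end MonotoneFunctions

section ComplementaryHalfLines

variable {α : Type*} [ConditionallyCompleteLinearOrder α] [TopologicalSpace α] [OrderTopology α]
  {G : Set α}

theorem exists_Ioi_subset_iff_exists_notMem (hG : IsOpen G) (hne : Gᶜ.Nonempty) :
    (∃ x, Ioi x ⊆ G) ↔ ∃ a, Ioi a ⊆ G ∧ a ∉ G := by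
  refine ⟨?_, fun ⟨a, ha, _⟩ => ⟨a, ha⟩⟩
  rintro ⟨x, hx⟩
  have hbdd : BddAbove Gᶜ := ⟨x, fun t ht => not_lt.1 fun hxt => ht (hx hxt)⟩
  refine ⟨sSup Gᶜ, fun t ht => ?_, hG.isClosed_compl.csSup_mem hne hbdd⟩
  exact not_not.1 fun htG => (le_csSup hbdd htG).not_gt ht

theorem exists_Iio_subset_iff_exists_notMem (hG : IsOpen G) (hne : Gᶜ.Nonempty) :
    (∃ x, Iio x ⊆ G) ↔ ∃ b, Iio b ⊆ G ∧ b ∉ G :=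
  exists_Ioi_subset_iff_exists_notMem (α := αᵒᵈ) hG hne

end ComplementaryHalfLines

theorem measure_inter_eq_zero_iff_disjoint {X : Type*} [TopologicalSpace X] [MeasurableSpace X]
    [OpensMeasurableSpace X] {μ : Measure X} {F U : Set X} (hF : F ⊆ (μ.restrict F).support)
    (hU : IsOpen U) : μ (F ∩ U) = 0 ↔ Disjoint F U := by
  refine ⟨fun h => ?_, fun h => by rw [h.inter_eq, measure_empty]⟩
  have hzero : μ.restrict F U = 0 := by rwa [Measure.restrict_apply hU.measurableSet, inter_comm]
  exact disjoint_left.2 fun x hxF hxU =>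
    Measure.subset_compl_support_of_isOpen hU hzero hxU (hF hxF)

theorem subset_support_restrict_of_forall_Ioo {μ : Measure ℝ} {F : Set ℝ}
    (hF : ∀ x ∈ F, ∀ δ : ℝ, 0 < δ → 0 < μ (F ∩ Ioo (x - δ) (x + δ))) :
    F ⊆ (μ.restrict F).support := by
  intro x hx
  refine (nhds_basis_Ioo_pos x).mem_measureSupport.2 fun {δ} hδ => ?_
  rw [Measure.restrict_apply measurableSet_Ioo, inter_comm]
  exact hF x hx δ hδ

section Jmap

variable {G : Set ℝ} (z : ℝ) {x y : ℝ}

theorem jmap_sub_jmap (hG : MeasurableSet G) (hxy : x ≤ y) :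
    jmap G z y - jmap G z x = volume.real (Gᶜ ∩ Ioo x y) := by
  have hint (a b : ℝ) :
      IntervalIntegrable (Gᶜ.indicator fun _ => (1 : ℝ)) volume a b :=
    ⟨(integrableOn_const measure_Ioc_lt_top.ne).indicator hG.compl,
      (integrableOn_const measure_Ioc_lt_top.ne).indicator hG.compl⟩
  calc jmap G z y - jmap G z x = ∫ t in x..y, Gᶜ.indicator (fun _ => (1 : ℝ)) t :=
        intervalIntegral.integral_interval_sub_left (hint z y) (hint z x)
    _ = ∫ t in Ioo x y, Gᶜ.indicator (fun _ => (1 : ℝ)) t := by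
        rw [intervalIntegral.integral_of_le hxy, integral_Ioc_eq_integral_Ioo]
    _ = volume.real (Gᶜ ∩ Ioo x y) := by
        rw [setIntegral_indicator hG.compl, setIntegral_const, smul_eq_mul, mul_one, inter_comm]

theorem monotone_jmap (hG : MeasurableSet G) : Monotone (jmap G z) := fun _ _ hxy =>
  sub_nonneg.1 (measureReal_nonneg.trans_eq (jmap_sub_jmap z hG hxy).symm)

theorem monotone_coe_jmap (hG : MeasurableSet G) : Monotone fun x => (jmap G z x : EReal) :=
  EReal.coe_strictMono.monotone.comp (monotone_jmap z hG)

theorem jmap_eq_jmap_iff (hG : MeasurableSet G) (hF : Gᶜ ⊆ (volume.restrict Gᶜ).support)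
    (hxy : x ≤ y) : jmap G z x = jmap G z y ↔ Ioo x y ⊆ G := by
  have hfin : volume (Gᶜ ∩ Ioo x y) ≠ ⊤ := measure_ne_top_of_subset inter_subset_right (by simp)
  rw [eq_comm, ← sub_eq_zero, jmap_sub_jmap z hG hxy, measureReal_eq_zero_iff hfin,
    measure_inter_eq_zero_iff_disjoint hF isOpen_Ioo, disjoint_compl_left_iff_subset]

theorem coe_jmap_eq_iSup_iff (hG : MeasurableSet G) (hF : Gᶜ ⊆ (volume.restrict Gᶜ).support) :
    ((jmap G z x : EReal) = ⨆ y, (jmap G z y : EReal)) ↔ Ioi x ⊆ G := by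
  rw [eq_iSup_iff_of_monotone (monotone_coe_jmap z hG)]
  simp only [EReal.coe_eq_coe_iff]
  refine ⟨fun h t hxt => ?_, fun h y hxy =>
    (jmap_eq_jmap_iff z hG hF hxy).2 (Ioo_subset_Ioi_self.trans h)⟩
  obtain ⟨y, hty⟩ := exists_gt t
  have hxy : x ≤ y := (hxt.trans hty).le
  exact (jmap_eq_jmap_iff z hG hF hxy).1 (h y hxy) ⟨hxt, hty⟩

theorem coe_jmap_eq_iInf_iff (hG : MeasurableSet G) (hF : Gᶜ ⊆ (volume.restrict Gᶜ).support) :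
    ((jmap G z x : EReal) = ⨅ y, (jmap G z y : EReal)) ↔ Iio x ⊆ G := by
  rw [eq_iInf_iff_of_monotone (monotone_coe_jmap z hG)]
  simp only [EReal.coe_eq_coe_iff]
  refine ⟨fun h t htx => ?_, fun h y hyx =>
    ((jmap_eq_jmap_iff z hG hF hyx).2 (Ioo_subset_Iio_self.trans h)).symm⟩
  obtain ⟨y, hyt⟩ := exists_lt t
  have hyx : y ≤ x := (hyt.trans htx).le
  exact (jmap_eq_jmap_iff z hG hF hyx).1 (h y hyx).symm ⟨hyt, htx⟩

theorem exists_coe_jmap_lt_iSup (hG : MeasurableSet G) (hF : Gᶜ ⊆ (volume.restrict Gᶜ).support)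
    (hne : Gᶜ.Nonempty) : ∃ x, (jmap G z x : EReal) < ⨆ y, (jmap G z y : EReal) := by
  obtain ⟨p, hp⟩ := hne
  refine ⟨p - 1, (le_iSup (fun y => (jmap G z y : EReal)) _).lt_of_ne fun h => hp ?_⟩
  exact (coe_jmap_eq_iSup_iff z hG hF).1 h (sub_one_lt p)

theorem exists_iInf_lt_coe_jmap (hG : MeasurableSet G) (hF : Gᶜ ⊆ (volume.restrict Gᶜ).support)
    (hne : Gᶜ.Nonempty) : ∃ x, (⨅ y, (jmap G z y : EReal)) < jmap G z x := by
  obtain ⟨p, hp⟩ := hne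
  refine ⟨p + 1, (iInf_le (fun y => (jmap G z y : EReal)) _).lt_of_ne fun h => hp ?_⟩
  exact (coe_jmap_eq_iInf_iff z hG hF).1 h.symm (lt_add_one p)

end Jmap

theorem stmt_12_general {G : Set ℝ} (hG : IsOpen G) (hne : Gᶜ.Nonempty)
    (hFloc : ∀ x ∈ Gᶜ, ∀ δ : ℝ, 0 < δ → 0 < volume (Gᶜ ∩ Ioo (x - δ) (x + δ))) (z : ℝ) :
    (((∃ x : ℝ, (jmap G z x : EReal) = ⨆ y : ℝ, (jmap G z y : EReal))
        ↔ (∃ ap : ℝ, Ioi ap ⊆ G ∧ ap ∉ G))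
      ∧ ((∃ x : ℝ, (jmap G z x : EReal) = ⨆ y : ℝ, (jmap G z y : EReal))
        ↔ (∃ c : EReal, c < (⨆ y : ℝ, (jmap G z y : EReal)) ∧
            volume {x : ℝ | c < (jmap G z x : EReal) ∧
              (jmap G z x : EReal) < ⨆ y : ℝ, (jmap G z y : EReal)} < ⊤)))
    ∧ (((∃ x : ℝ, (jmap G z x : EReal) = ⨅ y : ℝ, (jmap G z y : EReal))
        ↔ (∃ bm : ℝ, Iio bm ⊆ G ∧ bm ∉ G))
      ∧ ((∃ x : ℝ, (jmap G z x : EReal) = ⨅ y : ℝ, (jmap G z y : EReal))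
        ↔ (∃ c : EReal, (⨅ y : ℝ, (jmap G z y : EReal)) < c ∧
            volume {x : ℝ | (⨅ y : ℝ, (jmap G z y : EReal)) < (jmap G z x : EReal) ∧
              (jmap G z x : EReal) < c} < ⊤))) := by
  have hF := subset_support_restrict_of_forall_Ioo hFloc
  have hmono := monotone_coe_jmap z hG.measurableSet
  refine ⟨⟨?_, ?_⟩, ?_, ?_⟩
  · simpa only [coe_jmap_eq_iSup_iff z hG.measurableSet hF] using
      exists_Ioi_subset_iff_exists_notMem hG hne
  · exact exists_eq_iSup_iff_exists_measure_lt_top hmono (fun _ _ => measure_Ioo_lt_top)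
      (fun _ => Real.volume_Ici) (exists_coe_jmap_lt_iSup z hG.measurableSet hF hne)
  · simpa only [coe_jmap_eq_iInf_iff z hG.measurableSet hF] using
      exists_Iio_subset_iff_exists_notMem hG hne
  · exact exists_eq_iInf_iff_exists_measure_lt_top hmono (fun _ _ => measure_Ioo_lt_top)
      (fun _ => Real.volume_Iic) (exists_iInf_lt_coe_jmap z hG.measurableSet hF hne)

/-- Lemma 3.6: the right endpoint `a* = sup j(ℝ)` of `ℝ_j` is attained
(equivalently `G` has a component `(a₊, ∞)`) iff `m({c < j < a*}) < ∞`
for some `c < a*`; symmetrically for the left endpoint. -/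
theorem stmt_12 (G : Set ℝ) (hG : IsOpen G)
    (hdense : ∀ a b : ℝ, a < b → 0 < volume (G ∩ Ioo a b))
    (hF : 0 < volume Gᶜ)
    (hFloc : ∀ x ∈ Gᶜ, ∀ δ : ℝ, 0 < δ → 0 < volume (Gᶜ ∩ Ioo (x - δ) (x + δ)))
    (hGinf : volume G = ⊤)
    (z : ℝ) (hz : z ∈ Gᶜ)
    (hzH : (¬ ∃ c : ℝ, z < c ∧ Ioo z c ⊆ G) ∧ (¬ ∃ c : ℝ, c < z ∧ Ioo c z ⊆ G)) :
    (((∃ x : ℝ, (jmap G z x : EReal) = ⨆ y : ℝ, (jmap G z y : EReal))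
        ↔ (∃ ap : ℝ, Ioi ap ⊆ G ∧ ap ∉ G))
      ∧ ((∃ x : ℝ, (jmap G z x : EReal) = ⨆ y : ℝ, (jmap G z y : EReal))
        ↔ (∃ c : EReal, c < (⨆ y : ℝ, (jmap G z y : EReal)) ∧
            volume {x : ℝ | c < (jmap G z x : EReal) ∧
              (jmap G z x : EReal) < ⨆ y : ℝ, (jmap G z y : EReal)} < ⊤)))
    ∧ (((∃ x : ℝ, (jmap G z x : EReal) = ⨅ y : ℝ, (jmap G z y : EReal))
        ↔ (∃ bm : ℝ, Iio bm ⊆ G ∧ bm ∉ G))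
      ∧ ((∃ x : ℝ, (jmap G z x : EReal) = ⨅ y : ℝ, (jmap G z y : EReal))
        ↔ (∃ c : EReal, (⨅ y : ℝ, (jmap G z y : EReal)) < c ∧
            volume {x : ℝ | (⨅ y : ℝ, (jmap G z y : EReal)) < (jmap G z x : EReal) ∧
              (jmap G z x : EReal) < c} < ⊤))) :=
  stmt_12_general hG ⟨z, hz⟩ hFloc z
end

section
/- Regularization of the measure-dense set: let G ⊆ ℝ be open, F := ℝ ∖ G, f(x) := ∫₀ˣ 1_F(t) dt, and G̃ := {x ∈ ℝ : there exists δ > 0 with f(x+δ) = f(x−δ)}. Then G̃ is open, G ⊆ G̃, m(G̃ ∖ G) = 0 (so G̃ is an a.e. version of G), and F̃ := ℝ ∖ G̃ satisfies m(F̃ ∩ (x−δ, x+δ)) > 0 for every x ∈ F̃ and δ > 0; in particular F̃ has no isolated points. -/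
open MeasureTheory Set Filter

/-- `f(x) = ∫₀ˣ 1_F(t) dt` with `F = Gᶜ` (signed integral). -/
noncomputable def freg (G : Set ℝ) : ℝ → ℝ :=
  fun x => ∫ t in (0:ℝ)..x, Gᶜ.indicator (fun _ => (1:ℝ)) t

/-- `G̃ = {x : ∃ δ > 0, f(x+δ) = f(x−δ)}`. -/
def Gtilde (G : Set ℝ) : Set ℝ :=
  {x : ℝ | ∃ δ : ℝ, 0 < δ ∧ freg G (x + δ) = freg G (x - δ)}

/-!
The increment of `freg G` over `[a, b]` is the measure of `Gᶜ ∩ (a, b]`, so `x ∈ Gtilde G` exactly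
when `Gᶜ` is null near `x`. In other words, `(Gtilde G)ᶜ` is the topological support of Lebesgue
measure restricted to `Gᶜ`. A support is closed and conull, and that of an atomless measure has no
isolated points.
-/

section MeasureSupport

variable {X : Type*} [TopologicalSpace X] [HereditarilyLindelofSpace X] [MeasurableSpace X]
  {μ : Measure X}

lemma measure_support_inter_pos {U : Set X} {x : X} (hx : x ∈ μ.support) (hU : U ∈ nhds x) :
    0 < μ (μ.support ∩ U) := by
  rw [inter_comm, measure_inter_conull Measure.measure_compl_support]
  exact (Measure.mem_support_iff_forall x).1 hx U hU

lemma preperfect_measure_support [NullSingletonClass μ] : Preperfect μ.support := by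
  refine preperfect_iff_nhds.2 fun x hx U hU => ?_
  have hpos : 0 < μ (U \ {x}) := by
    rw [measure_sdiff_null (measure_singleton x)]
    exact (Measure.mem_support_iff_forall x).1 hx U hU
  obtain ⟨y, ⟨hyU, hyx⟩, hy⟩ := Measure.nonempty_inter_support_of_pos hpos
  exact ⟨y, ⟨hyU, hy⟩, hyx⟩

end MeasureSupport

section IntervalIntegral

variable {E : Type*} [NormedAddCommGroup E] {μ : Measure ℝ} {s : Set ℝ} {a b : ℝ}

lemma intervalIntegrable_indicator_const [IsLocallyFiniteMeasure μ] (hs : MeasurableSet s)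
    (c : E) : IntervalIntegrable (s.indicator fun _ => c) μ a b :=
  intervalIntegrable_iff.2 ((intervalIntegrable_iff.1 intervalIntegrable_const).indicator hs)

lemma intervalIntegral_indicator_const [NormedSpace ℝ E] [CompleteSpace E]
    (hs : MeasurableSet s) (hab : a ≤ b) (c : E) :
    ∫ t in a..b, s.indicator (fun _ => c) t ∂μ = μ.real (Ioc a b ∩ s) • c := by
  rw [intervalIntegral.integral_of_le hab, setIntegral_indicator hs, setIntegral_const]

end IntervalIntegral

section Regularization

variable {G : Set ℝ}

lemma freg_sub_freg (hG : MeasurableSet G) {a b : ℝ} (hab : a ≤ b) :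
    freg G b - freg G a = volume.real (Ioc a b ∩ Gᶜ) := by
  unfold freg
  rw [intervalIntegral.integral_interval_sub_left
      (intervalIntegrable_indicator_const hG.compl 1)
      (intervalIntegrable_indicator_const hG.compl 1),
    intervalIntegral_indicator_const hG.compl hab, smul_eq_mul, mul_one]

lemma freg_eq_freg_iff (hG : MeasurableSet G) {a b : ℝ} (hab : a ≤ b) :
    freg G b = freg G a ↔ volume.restrict Gᶜ (Ioo a b) = 0 := by
  have hfin : volume (Ioc a b ∩ Gᶜ) ≠ ⊤ := measure_inter_ne_top_of_left_ne_top measure_Ioc_lt_top.ne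
  rw [← sub_eq_zero, freg_sub_freg hG hab, measureReal_eq_zero_iff hfin,
    measure_congr (Ioo_ae_eq_Ioc (μ := volume.restrict Gᶜ)),
    Measure.restrict_apply measurableSet_Ioc]

lemma compl_Gtilde_eq_support (hG : MeasurableSet G) :
    (Gtilde G)ᶜ = (volume.restrict Gᶜ).support := by
  refine compl_eq_comm.1 (Set.ext fun x => ?_)
  rw [mem_compl_iff, (nhds_basis_Ioo_pos x).notMem_measureSupport]
  exact exists_congr fun δ => and_congr_right fun hδ =>
    (freg_eq_freg_iff hG (by linarith)).symm

lemma isOpen_Gtilde (hG : MeasurableSet G) : IsOpen (Gtilde G) := by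
  rw [← isClosed_compl_iff, compl_Gtilde_eq_support hG]
  exact Measure.isClosed_support

lemma subset_Gtilde (hG : IsOpen G) : G ⊆ Gtilde G := by
  rw [← compl_subset_compl, compl_Gtilde_eq_support hG.measurableSet]
  exact Measure.support_subset_of_isClosed hG.isClosed_compl
    (self_mem_ae_restrict hG.measurableSet.compl)

lemma volume_Gtilde_diff (hG : MeasurableSet G) : volume (Gtilde G \ G) = 0 := by
  rw [sdiff_eq, ← Measure.restrict_apply' hG.compl, ← compl_compl (Gtilde G),
    compl_Gtilde_eq_support hG]
  exact Measure.measure_compl_support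

end Regularization

/-- Regularization of the measure-dense set: `G̃` is an open a.e. version of `G`
whose complement `F̃` has locally positive measure at each of its points; in
particular `F̃` has no isolated points. -/
theorem stmt_15 (G : Set ℝ) (hG : IsOpen G) :
    IsOpen (Gtilde G)
    ∧ G ⊆ Gtilde G
    ∧ volume (Gtilde G \ G) = 0
    ∧ (∀ x ∈ (Gtilde G)ᶜ, ∀ δ : ℝ, 0 < δ →
        0 < volume ((Gtilde G)ᶜ ∩ Ioo (x - δ) (x + δ)))
    ∧ (∀ x ∈ (Gtilde G)ᶜ, ∀ δ : ℝ, 0 < δ →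
        ∃ y ∈ (Gtilde G)ᶜ, y ≠ x ∧ |y - x| < δ) := by
  have hF := compl_Gtilde_eq_support hG.measurableSet
  refine ⟨isOpen_Gtilde hG.measurableSet, subset_Gtilde hG, volume_Gtilde_diff hG.measurableSet,
    fun x hx δ hδ => ?locally_positive, fun x hx δ hδ => ?no_isolated_points⟩
  case locally_positive =>
    rw [hF] at hx ⊢
    exact (measure_support_inter_pos hx (Ioo_mem_nhds (by linarith) (by linarith))).trans_le
      (Measure.restrict_le_self _)
  case no_isolated_points =>
    rw [hF] at hx ⊢
    obtain ⟨y, ⟨hyδ, hy⟩, hyx⟩ :=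
      preperfect_iff_nhds.1 preperfect_measure_support x hx _ (Metric.ball_mem_nhds x hδ)
    exact ⟨y, hy, hyx, hyδ⟩
end

section
/- Nonexistence of an open version: if J ⊆ ℝ is a Lebesgue measurable set such that 0 < m(J ∩ I) < m(I) for every nonempty bounded open interval I, then there is no open set G ⊆ ℝ with m(J Δ G) = 0 (where Δ denotes symmetric difference). -/
open MeasureTheory Set

theorem measure_inter_eq_of_ae_le {X : Type*} [MeasurableSpace X] {μ : Measure X} {s t : Set X}
    (hts : t ≤ᵐ[μ] s) : μ (s ∩ t) = μ t :=
  (measure_mono inter_subset_right).antisymm <|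
    measure_mono_ae <| hts.mono fun _ hx hxt ↦ ⟨hx hxt, hxt⟩

theorem stmt_16_general {X : Type*} [TopologicalSpace X] [MeasurableSpace X] {μ : Measure X}
    {B : Set (Set X)} (hB : TopologicalSpace.IsTopologicalBasis B) {J : Set X} (hJ : μ J ≠ 0)
    (h : ∀ U ∈ B, U.Nonempty → μ (J ∩ U) < μ U) :
    ¬ ∃ G : Set X, IsOpen G ∧ μ (symmDiff J G) = 0 := by
  rintro ⟨G, hG, hJG⟩
  have hae : J =ᵐ[μ] G := measure_symmDiff_eq_zero_iff.mp hJG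
  have hG_nonempty : G.Nonempty := nonempty_of_measure_ne_zero (measure_congr hae ▸ hJ)
  obtain ⟨U, hUB, hU, hUG⟩ := hB.exists_nonempty_subset hG_nonempty hG
  have hUJ : U ≤ᵐ[μ] J := hUG.eventuallyLE.trans_eq hae.symm
  exact (h U hUB hU).ne (measure_inter_eq_of_ae_le hUJ)

/-- Nonexistence of an open version: if `0 < m(J ∩ I) < m(I)` for every nonempty
bounded open interval `I`, then `J` has no open a.e. version. -/
theorem stmt_16 (J : Set ℝ) (hJ : MeasurableSet J)
    (h : ∀ a b : ℝ, a < b →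
      0 < volume (J ∩ Ioo a b) ∧ volume (J ∩ Ioo a b) < volume (Ioo a b)) :
    ¬ ∃ G : Set ℝ, IsOpen G ∧ volume (symmDiff J G) = 0 := by
  have hJ_pos : 0 < volume J := (h 0 1 one_pos).1.trans_le (measure_mono inter_subset_left)
  refine stmt_16_general Real.isTopologicalBasis_Ioo_rat hJ_pos.ne' ?_
  simpa using fun U (a b : ℚ) hab hU _ ↦ hU ▸ (h a b (mod_cast hab)).2
end

section
/- Feller measure computation (limit appearing in the proof of Theorem 2.6): for all real a < b, lim_{α→∞} α ∫_a^b [sinh(√(2α)(b−x)) / sinh(√(2α)(b−a))] · [(x−a)/(b−a)] dx = 1/(2(b−a)). -/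
open MeasureTheory Set Filter

/-!
With `k = √(2α)`, integration by parts gives
`k² ∫_a^b sinh (k (b - x)) / sinh (k (b - a)) · (x - a) / (b - a) dx
  = 1 / (b - a) - k / sinh (k (b - a))`,
and the last term vanishes as `k → ∞` because `sinh` outgrows the identity.
-/

theorem tendsto_pow_div_sinh_atTop_nhds_zero (n : ℕ) :
    Tendsto (fun y : ℝ => y ^ n / Real.sinh y) atTop (nhds 0) := by
  have exp_neg_sq : Tendsto (fun y : ℝ => Real.exp (-y) ^ 2) atTop (nhds 0) := by
    simpa using Real.tendsto_exp_neg_atTop_nhds_zero.pow 2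
  have exp_neg_mul_sinh :
      Tendsto (fun y : ℝ => Real.exp (-y) * Real.sinh y) atTop (nhds (1 / 2)) := by
    have h : Tendsto (fun y : ℝ => (1 - Real.exp (-y) ^ 2) / 2) atTop (nhds (1 / 2)) := by
      simpa using (exp_neg_sq.const_sub 1).div_const 2
    refine h.congr fun y => ?_
    rw [Real.sinh_eq, Real.exp_neg]
    field_simp
  have quotient :=
    (Real.tendsto_pow_mul_exp_neg_atTop_nhds_zero n).div exp_neg_mul_sinh (by norm_num)
  rw [zero_div] at quotient
  refine quotient.congr fun y => ?_
  rw [Pi.div_apply, mul_comm, mul_div_mul_left _ _ (Real.exp_ne_zero _)]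

theorem tendsto_div_sinh_mul_atTop_nhds_zero {c : ℝ} (hc : 0 < c) :
    Tendsto (fun k : ℝ => k / Real.sinh (k * c)) atTop (nhds 0) := by
  have h := ((tendsto_pow_div_sinh_atTop_nhds_zero 1).comp
    (tendsto_id.atTop_mul_const hc)).div_const c
  rw [zero_div] at h
  refine h.congr fun k => ?_
  simp only [Function.comp_apply, id_eq, pow_one]
  rw [div_right_comm, mul_div_cancel_right₀ _ hc.ne']

section Integral

variable {k : ℝ} (a b : ℝ)

theorem integral_cosh : ∫ x in a..b, Real.cosh x = Real.sinh b - Real.sinh a :=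
  intervalIntegral.integral_eq_sub_of_hasDerivAt (fun x _ => Real.hasDerivAt_sinh x)
    (Real.continuous_cosh.intervalIntegrable a b)

theorem integral_cosh_mul_sub (hk : k ≠ 0) (c : ℝ) :
    ∫ x in a..b, Real.cosh (k * (c - x)) =
      (Real.sinh (k * (c - a)) - Real.sinh (k * (c - b))) / k := by
  simp only [mul_sub]
  rw [intervalIntegral.integral_comp_sub_mul _ hk, integral_cosh, smul_eq_mul, inv_mul_eq_div]

theorem integral_sinh_mul_sub_mul_sub (hk : k ≠ 0) :
    ∫ x in a..b, Real.sinh (k * (b - x)) * (x - a) =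
      Real.sinh (k * (b - a)) / k ^ 2 - (b - a) / k := by
  have deriv_linear (x : ℝ) : HasDerivAt (fun x => x - a) 1 x := (hasDerivAt_id x).sub_const a
  have deriv_cosh (x : ℝ) :
      HasDerivAt (fun x => -Real.cosh (k * (b - x)) / k) (Real.sinh (k * (b - x))) x := by
    refine ((((hasDerivAt_id x).const_sub b).const_mul k).cosh.neg.div_const k).congr_deriv ?_
    simp only [id_eq]
    field_simp
  calc ∫ x in a..b, Real.sinh (k * (b - x)) * (x - a)
      = ∫ x in a..b, (x - a) * Real.sinh (k * (b - x)) := by simp only [mul_comm]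
    _ = (b - a) * (-Real.cosh (k * (b - b)) / k) - (a - a) * (-Real.cosh (k * (b - a)) / k) -
          ∫ x in a..b, 1 * (-Real.cosh (k * (b - x)) / k) :=
        intervalIntegral.integral_mul_deriv_eq_deriv_mul (fun x _ => deriv_linear x)
          (fun x _ => deriv_cosh x) intervalIntegrable_const
          ((by fun_prop : Continuous _).intervalIntegrable a b)
    _ = (∫ x in a..b, Real.cosh (k * (b - x))) / k - (b - a) / k := by
        simp only [one_mul, intervalIntegral.integral_div, intervalIntegral.integral_neg,
          sub_self, mul_zero, Real.cosh_zero]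
        ring
    _ = Real.sinh (k * (b - a)) / k ^ 2 - (b - a) / k := by
        rw [integral_cosh_mul_sub a b hk, sub_self, mul_zero, Real.sinh_zero, sub_zero,
          div_div, ← sq]

variable {a b}

theorem sq_mul_integral_sinh_div_sinh_mul_sub_div (hk : k ≠ 0) (hab : a ≠ b) :
    k ^ 2 * ∫ x in a..b,
        (Real.sinh (k * (b - x)) / Real.sinh (k * (b - a))) * ((x - a) / (b - a)) =
      1 / (b - a) - k / Real.sinh (k * (b - a)) := by
  have length_ne : b - a ≠ 0 := sub_ne_zero.2 hab.symm
  have sinh_ne : Real.sinh (k * (b - a)) ≠ 0 := Real.sinh_ne_zero.2 (mul_ne_zero hk length_ne)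
  simp only [div_mul_div_comm, intervalIntegral.integral_div]
  rw [integral_sinh_mul_sub_mul_sub a b hk]
  field_simp

end Integral

theorem tendsto_sq_mul_integral_sinh_div_sinh_mul_sub_div {a b : ℝ} (hab : a < b) :
    Tendsto (fun k : ℝ => k ^ 2 * ∫ x in a..b,
        (Real.sinh (k * (b - x)) / Real.sinh (k * (b - a))) * ((x - a) / (b - a)))
      atTop (nhds (1 / (b - a))) := by
  have h := (tendsto_div_sinh_mul_atTop_nhds_zero (sub_pos.2 hab)).const_sub (1 / (b - a))
  rw [sub_zero] at h
  refine h.congr' ?_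
  filter_upwards [eventually_ne_atTop 0] with k hk
  exact (sq_mul_integral_sinh_div_sinh_mul_sub_div hk hab.ne).symm

/-- The Feller measure limit from the proof of Theorem 2.6:
`lim_{α→∞} α ∫_a^b sinh(√(2α)(b−x))/sinh(√(2α)(b−a)) · (x−a)/(b−a) dx = 1/(2(b−a))`. -/
theorem stmt_19 (a b : ℝ) (hab : a < b) :
    Tendsto (fun α : ℝ =>
        α * ∫ x in a..b,
          (Real.sinh (Real.sqrt (2 * α) * (b - x))
              / Real.sinh (Real.sqrt (2 * α) * (b - a))) * ((x - a) / (b - a)))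
      atTop (nhds (1 / (2 * (b - a)))) := by
  have sqrt_atTop : Tendsto (fun α : ℝ => Real.sqrt (2 * α)) atTop atTop :=
    Real.tendsto_sqrt_atTop.comp (tendsto_id.const_mul_atTop two_pos)
  have h := ((tendsto_sq_mul_integral_sinh_div_sinh_mul_sub_div hab).comp sqrt_atTop).div_const 2
  rw [div_div, mul_comm (b - a)] at h
  refine h.congr' ?_
  filter_upwards [eventually_ge_atTop 0] with α hα
  rw [Function.comp_apply, Real.sq_sqrt (by positivity), mul_assoc,
    mul_div_cancel_left₀ _ two_ne_zero]
end
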